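/- Let G be a finitely presented group which contains no subgroup isomorphic to the free group F_2 of rank 2. Then for every surjective homomorphism φ : G → ℤ the rank gradient rg(G,φ) vanishes. -/

import Mathlib

/-!
Let `s : G` have `φ s = 1`. By the Bieri–Strebel argument (`exists_toHNN`), finite presentation
yields a finitely generated subgroup `B` of `ker φ` such that `B` and `s` generate `G`, together
with a homomorphism from `G` to the HNN extension of `B` along conjugation by `s` (defined on
`B ∩ s⁻¹ B s`) that is the identity on `B` and takes `s` to the stable letter. Here `B` is generated
by the conjugates `s ^ j * k i * s ^ (-j)`, `|j| ≤ N`, of finitely many elements `k i` of `ker φ`;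
each of the finitely many relators is a product of such conjugates and so holds in the HNN extension
once `N` is large.

If conjugation by `s` maps `B` into itself neither forwards nor backwards, pick `b` and `b'` in `B`
witnessing this. Then `t` and `b' * t * b⁻¹` generate a free group of rank two in the HNN extension,
by ping-pong on normal words (`exists_free_pair`), so `s` and `b' * s * b⁻¹` do so in `G`.

Otherwise, with `t = s` or `t = s⁻¹`, one has `t * B * t⁻¹ ≤ B`. Every element of `G` then has the
form `t ^ (-k) * b * t ^ (-l)` with `b ∈ B` and with `k` replaceable by any larger integer. Taking
`k` divisible by `i` shows that `G_i` is generated by `B` and `t ^ i`. Its rank is therefore bounded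
independently of `i`, while its index is `i` (`rg_eq_zero_of_ascending`).
-/

/-- The rank of a group: the minimal number of generators. -/
noncomputable def grank (G : Type*) [Group G] : ℕ :=
  sInf {n : ℕ | ∃ S : Finset G, S.card = n ∧ Subgroup.closure (S : Set G) = ⊤}

/-- `modKer φ i` is the subgroup `G_i = Ker(G → ℤ → ℤ/iℤ)`. -/
def modKer {G : Type*} [Group G] (φ : G →* Multiplicative ℤ) (i : ℕ) : Subgroup G :=
  ((AddMonoidHom.toMultiplicative (Int.castAddHom (ZMod i))).comp φ).ker

/-- The rank gradient of `(G, φ)`: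
`liminf_{i → ∞} rk(G_i) / [G : G_i]`. -/
noncomputable def rg {G : Type*} [Group G] (φ : G →* Multiplicative ℤ) : ℝ :=
  Filter.liminf
    (fun i : ℕ => (grank (modKer φ i) : ℝ) / ((modKer φ i).index : ℝ)) Filter.atTop

/-- A group is finitely presented if it is isomorphic to the quotient of a finitely
generated free group by finitely many relations. -/
def IsFinitelyPresented (Γ : Type*) [Group Γ] : Prop :=
  ∃ (n : ℕ) (rels : Set (FreeGroup (Fin n))),
    rels.Finite ∧ Nonempty (PresentedGroup rels ≃* Γ)

/-! ### A free subgroup of a non-ascending HNN extension -/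

section PingPong

open HNNExtension HNNExtension.NormalWord
open scoped Pointwise Function

universe u

variable {K : Type u} [Group K] {A A₂ : Subgroup K} {θ : A ≃* A₂} {d : TransversalPair K A A₂}

/-- The normal words whose first edge, read in the Bass–Serre tree from the base vertex, is the
edge labelled `g * t ^ u`: the word is `g₀ * t ^ u * ⋯` with `g₀` in the coset
`g * toSubgroup A A₂ (-u)`. The first syllable `g₀` matters only up to this coset because
`t ^ u * a = a' * t ^ u`, where `a'` runs through `toSubgroup A A₂ (-u)` as `a` runs through
`toSubgroup A A₂ u`. -/
def edgeSet (d : TransversalPair K A A₂) (u : ℤˣ) (g : K) : Set (NormalWord d) :=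
  {w | w.toList.head?.map Prod.fst = some u ∧ g⁻¹ * w.head ∈ toSubgroup A A₂ (-u)}

/-- The word `t ^ u * w` starts with `t ^ u` unless `w` starts with the inverse edge, which is
exactly the condition `Cancels u w`. -/
theorem unitsSMul_mem_edgeSet (u : ℤˣ) (w : NormalWord d) (hw : w ∉ edgeSet d (-u) 1) :
    unitsSMul θ u w ∈ edgeSet d u 1 := by
  have hc : ¬ Cancels u w := fun h => hw ⟨h.2, by simpa using h.1⟩
  rw [unitsSMul, dif_neg hc]
  simp [edgeSet]

theorem of_smul_mem_edgeSet_iff (u : ℤˣ) (g h : K) (w : NormalWord d) :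
    (of g : HNNExtension K A A₂ θ) • w ∈ edgeSet d u h ↔ w ∈ edgeSet d u (g⁻¹ * h) := by
  rw [of_smul_eq_smul]
  simp [edgeSet, mul_assoc]

/-- The element `p * t ^ u * q⁻¹` sends everything outside the edge `q * t ^ (-u)` into the edge
`p * t ^ u`; this is the ping-pong step. -/
theorem translate_mem_edgeSet (u : ℤˣ) (p q : K) (w : NormalWord d) (hw : w ∉ edgeSet d (-u) q) :
    (of p * t ^ (u : ℤ) * (of q)⁻¹ : HNNExtension K A A₂ θ) • w ∈ edgeSet d u p := by
  rw [mul_smul, mul_smul, of_smul_mem_edgeSet_iff, t_pow_smul_eq_unitsSMul, inv_mul_cancel]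
  apply unitsSMul_mem_edgeSet
  rwa [← map_inv, of_smul_mem_edgeSet_iff, inv_inv, mul_one]

theorem disjoint_edgeSet {u v : ℤˣ} {g h : K}
    (H : u = v → g⁻¹ * h ∉ toSubgroup A A₂ (-u)) :
    Disjoint (edgeSet d u g) (edgeSet d v h) := by
  rw [Set.disjoint_left]
  rintro w ⟨h1, h2⟩ ⟨h3, h4⟩
  have huv : u = v := by simpa using h1.symm.trans h3
  subst huv
  refine H rfl ?_
  simpa [mul_assoc] using mul_mem h2 (inv_mem h4)

theorem edgeSet_nonempty (θ : A ≃* A₂) (u : ℤˣ) (g : K) : (edgeSet d u g).Nonempty :=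
  ⟨_, translate_mem_edgeSet (θ := θ) u g 1 empty (by simp [edgeSet])⟩

/-- In an HNN extension that is ascending in neither direction, `t` and `b' * t * b⁻¹` freely
generate a free group. They play ping-pong with the edges `t`, `b' * t`, `t⁻¹`, `b * t⁻¹` at the
base vertex, which are pairwise distinct since `b' ∉ A₂` and `b ∉ A`. -/
theorem exists_free_pair {b b' : K} (hb : b ∉ A) (hb' : b' ∉ A₂) :
    Function.Injective (FreeGroup.lift
      ![(t : HNNExtension K A A₂ θ), of b' * t * (of b)⁻¹]) := by
  obtain ⟨d⟩ : Nonempty (TransversalPair K A A₂) := inferInstance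
  -- the ping-pong lemma wants the index type in the universe of the group
  let a : ULift.{u} (Fin 2) → HNNExtension K A A₂ θ :=
    fun i => ![t, of b' * t * (of b)⁻¹] i.down
  have key : Function.Injective (FreeGroup.lift a) := by
    refine FreeGroup.injective_lift_of_ping_pong (α := NormalWord d) a
      (fun i => edgeSet d 1 (![1, b'] i.down)) (fun i => edgeSet d (-1) (![1, b] i.down))
      (fun i => edgeSet_nonempty θ _ _) ?_ ?_ ?_ ?_ ?_
    · rintro ⟨i⟩ ⟨j⟩ hij
      apply disjoint_edgeSet
      fin_cases i <;> fin_cases j <;> simp_all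
    · rintro ⟨i⟩ ⟨j⟩ hij
      apply disjoint_edgeSet
      fin_cases i <;> fin_cases j <;> simp_all
    · intro i j
      apply disjoint_edgeSet
      intro h
      exact absurd h (by decide)
    · rintro ⟨i⟩ _ ⟨w, hw, rfl⟩
      have := translate_mem_edgeSet (θ := θ) 1 (![1, b'] i) (![1, b] i) w hw
      fin_cases i <;> simpa [a] using this
    · rintro ⟨i⟩ _ ⟨w, hw, rfl⟩
      have := translate_mem_edgeSet (θ := θ) (-1) (![1, b] i) (![1, b'] i) w (by simpa using hw)
      fin_cases i <;> simpa [a, mul_assoc] using this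
  have hcomp : FreeGroup.lift ![(t : HNNExtension K A A₂ θ), of b' * t * (of b)⁻¹] =
      (FreeGroup.lift a).comp (FreeGroup.map ULift.up) := by
    ext i
    simp [a]
  rw [hcomp]
  exact key.comp (FreeGroup.map_injective ULift.up_injective)

end PingPong

/-! ### The Bieri–Strebel splitting -/

section Splitting

open HNNExtension

variable {G : Type*} [Group G]

/-- The elements `b` of `B` such that `t * b * t⁻¹` is again in `B`, as a subgroup of `B`. -/
def conjDom (B : Subgroup G) (t : G) : Subgroup B :=
  B.comap ((MulAut.conj t).toMonoidHom.comp B.subtype)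

theorem mem_conjDom {B : Subgroup G} {t : G} {b : B} :
    b ∈ conjDom B t ↔ t * b * t⁻¹ ∈ B := Iff.rfl

/-- Conjugation by `t`, as an isomorphism between the largest subgroups of `B` it matches up. -/
def conjIso (B : Subgroup G) (t : G) : conjDom B t ≃* conjDom B t⁻¹ where
  toFun b := ⟨⟨t * b * t⁻¹, mem_conjDom.1 b.2⟩, mem_conjDom.2 (by simp [mul_assoc])⟩
  invFun b := ⟨⟨t⁻¹ * b * t, by simpa using mem_conjDom.1 b.2⟩,
    mem_conjDom.2 (by simp [mul_assoc])⟩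
  left_inv b := by ext; simp [mul_assoc]
  right_inv b := by ext; simp [mul_assoc]
  map_mul' b c := by ext; simp [mul_assoc]

/-- The HNN extension of `B` along the partial automorphism of `B` given by conjugation by `t`.
Its stable letter is `HNNExtension.t`, not to be confused with the element `t` of `G`. -/
abbrev ConjHNN (B : Subgroup G) (t : G) : Type _ :=
  HNNExtension B (conjDom B t) (conjDom B t⁻¹) (conjIso B t)

/-- Conjugation by `t ^ m` in `ConjHNN B s` agrees with conjugation by `s ^ m` in `G`, provided
that all intermediate conjugates stay in `B`. -/
theorem stable_pow_mul_of {B : Subgroup G} {s : G} (m : ℕ) {b b' : B}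
    (h : ∀ j : ℕ, j ≤ m → s ^ j * b * (s ^ j)⁻¹ ∈ B) (hb' : (b' : G) = s ^ m * b * (s ^ m)⁻¹) :
    (t ^ m * of b : ConjHNN B s) = of b' * t ^ m := by
  induction m generalizing b' with
  | zero =>
    obtain rfl : b' = b := by ext; simpa using hb'
    simp
  | succ m ih =>
    set c : B := ⟨s ^ m * b * (s ^ m)⁻¹, h m m.le_succ⟩ with hc
    have h1 : (b' : G) = s * c * s⁻¹ := by
      rw [hb', hc, pow_succ']
      simp [mul_assoc]
    have h2 : (t * of c : ConjHNN B s) = of b' * t := by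
      have hcd : c ∈ conjDom B s := mem_conjDom.2 (h1 ▸ b'.2)
      have h3 := t_mul_of (φ := conjIso B s) ⟨c, hcd⟩
      convert h3 using 3
      exact Subtype.ext h1
    rw [pow_succ', mul_assoc, ih (fun j hj => h j (hj.trans m.le_succ)) (b' := c) rfl, ← mul_assoc,
      h2, mul_assoc]

theorem stable_zpow_mul_of {B : Subgroup G} {s : G} (m : ℤ) {b b' : B}
    (h : ∀ j : ℤ, |j| ≤ |m| → s ^ j * b * (s ^ j)⁻¹ ∈ B)
    (hb' : (b' : G) = s ^ m * b * (s ^ m)⁻¹) :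
    (t ^ m * of b : ConjHNN B s) = of b' * t ^ m := by
  obtain ⟨n, rfl | rfl⟩ := m.eq_nat_or_neg
  · simp only [zpow_natCast] at hb' ⊢
    refine stable_pow_mul_of n (fun j hj => ?_) hb'
    simpa using h j (by simpa using hj)
  · simp only [zpow_neg, zpow_natCast] at hb' ⊢
    have := stable_pow_mul_of (s := s) n (b := b') (b' := b) (fun j hj => ?_) ?_
    · rw [inv_mul_eq_iff_eq_mul, ← mul_assoc, this, mul_inv_cancel_right]
    · convert h (j - n) ?_ using 1
      · rw [hb', zpow_sub]
        simp [mul_assoc]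
      · rw [abs_neg, abs_le, Nat.abs_cast]
        omega
    · rw [hb']
      simp [mul_assoc]

variable {ι : Type*}

/-- The subgroup generated by the conjugates of the `k i` by `s ^ j` with `|j| ≤ N`. -/
def slab (k : ι → G) (s : G) (N : ℕ) : Subgroup G :=
  Subgroup.closure {g | ∃ i, ∃ j : ℤ, |j| ≤ N ∧ g = s ^ j * k i * (s ^ j)⁻¹}

variable {k : ι → G} {s : G}

theorem conj_mem_slab (i : ι) {j : ℤ} {N : ℕ} (hj : |j| ≤ N) :
    s ^ j * k i * (s ^ j)⁻¹ ∈ slab k s N :=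
  Subgroup.subset_closure ⟨i, j, hj, rfl⟩

theorem mem_slab (i : ι) (N : ℕ) : k i ∈ slab k s N := by
  simpa using conj_mem_slab (k := k) (s := s) i (j := 0) (N := N) (by simp)

theorem slab_mono : Monotone (slab k s) := by
  intro M N h
  refine Subgroup.closure_mono ?_
  rintro _ ⟨i, j, hj, rfl⟩
  exact ⟨i, j, hj.trans (by exact_mod_cast h), rfl⟩

theorem zpow_conj_mem_slab {M N : ℕ} {e : ℤ} (h : M + |e| ≤ N) {b : G} (hb : b ∈ slab k s M) :
    s ^ e * b * (s ^ e)⁻¹ ∈ slab k s N := by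
  have : slab k s M ≤ (slab k s N).comap (MulAut.conj (s ^ e)).toMonoidHom := by
    refine (Subgroup.closure_le _).2 ?_
    rintro _ ⟨i, j, hj, rfl⟩
    have := conj_mem_slab (k := k) (s := s) i (j := e + j) (N := N)
      ((abs_add_le _ _).trans (by linarith))
    rw [SetLike.mem_coe, Subgroup.mem_comap]
    change s ^ e * (s ^ j * k i * (s ^ j)⁻¹) * (s ^ e)⁻¹ ∈ _
    simpa [zpow_add, mul_assoc] using this
  exact this hb

theorem slab_fg [Finite ι] (k : ι → G) (s : G) (N : ℕ) :
    ∃ S : Finset G, Subgroup.closure (S : Set G) = slab k s N := by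
  have hfin : {g | ∃ i, ∃ j : ℤ, |j| ≤ N ∧ g = s ^ j * k i * (s ^ j)⁻¹}.Finite := by
    refine ((Set.finite_univ (α := ι)).prod (Set.finite_Icc (-(N : ℤ)) N)).image
      (fun p => s ^ p.2 * k p.1 * (s ^ p.2)⁻¹) |>.subset ?_
    rintro _ ⟨i, j, hj, rfl⟩
    exact ⟨(i, j), ⟨trivial, abs_le.1 hj⟩, rfl⟩
  exact ⟨hfin.toFinset, by rw [hfin.coe_toFinset, slab]⟩

variable (k s) in
/-- The homomorphism to the HNN extension of `slab k s N` that is given on generators by the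
formula `k i * s ^ e i`, with the stable letter in place of `s`. -/
def toHNN (e : ι → ℤ) (N : ℕ) : FreeGroup ι →* ConjHNN (slab k s N) s :=
  FreeGroup.lift fun i => of ⟨k i, mem_slab i N⟩ * t ^ e i

/-- Let a word `w` evaluate in `G` (under `of i ↦ k i * s ^ e i`) to `b * s ^ m`, where `m` is its
total degree. For all large `N` the element `b` lies in `slab k s N` and `w` evaluates to `b * t ^ m`
in the HNN extension too. In particular a relator of degree zero becomes trivial there. -/
theorem toHNN_eventually (e : ι → ℤ) (w : FreeGroup ι) :
    ∃ M : ℕ, ∀ N ≥ M, ∃ b : slab k s N, (b : G) ∈ slab k s M ∧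
      FreeGroup.lift (fun i => k i * s ^ e i) w =
        b * s ^ (FreeGroup.lift (fun i => Multiplicative.ofAdd (e i)) w).toAdd ∧
      toHNN k s e N w =
        of b * t ^ (FreeGroup.lift (fun i => Multiplicative.ofAdd (e i)) w).toAdd := by
  induction w using FreeGroup.induction_on with
  | C1 => exact ⟨0, fun N _ => ⟨1, one_mem _, by simp, by simp⟩⟩
  | of i => exact ⟨0, fun N _ => ⟨⟨k i, mem_slab i N⟩, mem_slab i 0, by simp, by simp [toHNN]⟩⟩
  | inv_of i hi =>
    obtain ⟨M, hM⟩ := hi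
    change ∃ M : ℕ, ∀ N ≥ M, ∃ b : slab k s N, (b : G) ∈ slab k s M ∧
      FreeGroup.lift (fun i => k i * s ^ e i) (FreeGroup.of i)⁻¹ =
        b * s ^ (FreeGroup.lift (fun i => Multiplicative.ofAdd (e i)) (FreeGroup.of i)⁻¹).toAdd ∧
      toHNN k s e N (FreeGroup.of i)⁻¹ =
        of b * t ^ (FreeGroup.lift (fun i => Multiplicative.ofAdd (e i)) (FreeGroup.of i)⁻¹).toAdd
    simp only [map_inv, toAdd_inv]
    generalize (FreeGroup.lift (fun i => Multiplicative.ofAdd (e i)) (FreeGroup.of i)).toAdd = p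
      at *
    refine ⟨M + p.natAbs, fun N hN => ?_⟩
    obtain ⟨b, hb, hb1, hb2⟩ := hM N (by omega)
    have hconj : ∀ j : ℤ, |j| ≤ |p| →
        s ^ j * (b⁻¹ : slab k s N) * (s ^ j)⁻¹ ∈ slab k s (M + p.natAbs) :=
      fun j hj => zpow_conj_mem_slab (by push_cast; linarith) (inv_mem hb)
    have hmono := slab_mono (k := k) (s := s) hN
    have hp := hconj (-p) (by rw [abs_neg])
    refine ⟨⟨_, hmono hp⟩, hp, ?_, ?_⟩
    · rw [hb1]
      simp
    · rw [hb2, mul_inv_rev, ← map_inv, ← zpow_neg]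
      exact stable_zpow_mul_of (s := s) (-p)
        (fun j hj => hmono (hconj j (by rwa [abs_neg] at hj))) rfl
  | mul v w hv hw =>
    obtain ⟨M₁, h₁⟩ := hv
    obtain ⟨M₂, h₂⟩ := hw
    simp only [map_mul, toAdd_mul]
    generalize (FreeGroup.lift (fun i => Multiplicative.ofAdd (e i)) v).toAdd = p at *
    generalize (FreeGroup.lift (fun i => Multiplicative.ofAdd (e i)) w).toAdd = q at *
    refine ⟨max M₁ (M₂ + p.natAbs), fun N hN => ?_⟩
    obtain ⟨b, hb, hb1, hb2⟩ := h₁ N ((le_max_left _ _).trans hN)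
    obtain ⟨c, hc, hc1, hc2⟩ := h₂ N (by omega)
    have hconj : ∀ j : ℤ, |j| ≤ |p| → s ^ j * c * (s ^ j)⁻¹ ∈ slab k s (M₂ + p.natAbs) :=
      fun j hj => zpow_conj_mem_slab (by push_cast; linarith) hc
    have hmono := slab_mono (k := k) (s := s) ((le_max_right M₁ (M₂ + p.natAbs)).trans hN)
    refine ⟨b * ⟨s ^ p * c * (s ^ p)⁻¹, hmono (hconj p le_rfl)⟩,
      mul_mem (slab_mono (le_max_left _ _) hb) (slab_mono (le_max_right _ _) (hconj p le_rfl)),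
      ?_, ?_⟩
    · rw [hb1, hc1, zpow_add]
      simp [mul_assoc]
    · rw [hb2, hc2, zpow_add, map_mul]
      have := stable_zpow_mul_of (s := s) p (b := c)
        (b' := ⟨s ^ p * c * (s ^ p)⁻¹, hmono (hconj p le_rfl)⟩) (fun j hj => hmono (hconj j hj)) rfl
      simp only [mul_assoc]
      rw [← mul_assoc (t ^ p), this]
      simp only [mul_assoc]

/-- The Bieri–Strebel splitting, in the form needed here: a finitely presented group `G` with a
homomorphism to `ℤ` taking `s` to `1` maps to the HNN extension of a finitely generated subgroup `B`
of the kernel, where `B` and `s` generate `G`, compatibly with `B` and `s`. -/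
theorem exists_toHNN {R : Set (FreeGroup ι)} [Finite ι] (hR : R.Finite)
    (f : PresentedGroup R ≃* G) (φ : G →* Multiplicative ℤ) (hs : φ s = Multiplicative.ofAdd 1) :
    ∃ (B : Subgroup G) (S : Finset G), Subgroup.closure (S : Set G) = B ∧ B ≤ φ.ker ∧
      Subgroup.closure ((B : Set G) ∪ {s}) = ⊤ ∧
      ∃ Ψ : G →* ConjHNN B s, Ψ s = t ∧ ∀ b : B, Ψ b = of b := by
  obtain ⟨p, hp⟩ : ∃ p : FreeGroup ι →* G, p = f.toMonoidHom.comp (PresentedGroup.mk R) := ⟨_, rfl⟩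
  have hpsurj : Function.Surjective p := hp ▸ f.surjective.comp (PresentedGroup.mk_surjective R)
  obtain ⟨e, he⟩ : ∃ e : ι → ℤ, e = fun i => (φ (p (FreeGroup.of i))).toAdd := ⟨_, rfl⟩
  obtain ⟨k, hk⟩ : ∃ k : ι → G, k = fun i => p (FreeGroup.of i) * (s ^ e i)⁻¹ := ⟨_, rfl⟩
  have hlift : FreeGroup.lift (fun i => k i * s ^ e i) = p := by
    ext i
    simp [hk]
  have hdeg : FreeGroup.lift (fun i => Multiplicative.ofAdd (e i)) = φ.comp p := by
    ext i
    simp [he]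
  have hker : ∀ i, φ (k i) = 1 := by
    intro i
    rw [← toAdd_eq_zero]
    simp [hk, hs, he]
  -- the word `w₀` is treated like a relator below, so that it is sent to the stable letter
  obtain ⟨w₀, hw₀⟩ := hpsurj s
  have hev : ∀ w, ∃ M : ℕ, ∀ N ≥ M, ∃ b : slab k s N,
      p w = b * s ^ (φ (p w)).toAdd ∧ toHNN k s e N w = of b * t ^ (φ (p w)).toAdd := by
    intro w
    obtain ⟨M, hM⟩ := toHNN_eventually (k := k) (s := s) e w
    refine ⟨M, fun N hN => ?_⟩
    obtain ⟨b, -, h1, h2⟩ := hM N hN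
    rw [hdeg] at h1 h2
    rw [hlift] at h1
    exact ⟨b, h1, h2⟩
  choose M hM using hev
  obtain ⟨N, hN⟩ := ((hR.insert w₀).image M).bddAbove
  have hN' : ∀ w ∈ insert w₀ R, M w ≤ N := fun w hw => hN ⟨w, hw, rfl⟩
  -- a relator has degree zero and value one in `G`, so its base part `b` is trivial
  have hrel : ∀ r ∈ R, toHNN k s e N r = 1 := by
    intro r hr
    obtain ⟨b, h1, h2⟩ := hM r N (hN' r (Set.mem_insert_of_mem _ hr))
    have hr1 : p r = 1 := by
      simp [hp, PresentedGroup.one_of_mem hr]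
    rw [hr1] at h1 h2
    have hb : b = 1 := by ext; simpa using h1.symm
    simpa [hb] using h2
  have hstable : toHNN k s e N w₀ = t := by
    obtain ⟨b, h1, h2⟩ := hM w₀ N (hN' w₀ (Set.mem_insert _ _))
    rw [hw₀, hs] at h1 h2
    have hb : b = 1 := by ext; simpa using h1
    simpa [hb] using h2
  obtain ⟨S, hS⟩ := slab_fg k s N
  obtain ⟨Ψ, hΨp⟩ : ∃ Ψ : G →* ConjHNN (slab k s N) s, ∀ w, Ψ (p w) = toHNN k s e N w := by
    unfold toHNN at hrel ⊢
    refine ⟨(PresentedGroup.toGroup hrel).comp f.symm.toMonoidHom, fun w => ?_⟩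
    rw [hp]
    simp only [MonoidHom.comp_apply, MulEquiv.toMonoidHom_eq_coe, MonoidHom.coe_coe,
      MulEquiv.symm_apply_apply]
    rfl
  have hΨs : Ψ s = t := (congrArg Ψ hw₀.symm).trans ((hΨp w₀).trans hstable)
  have hΨk : ∀ i, Ψ (k i) = of ⟨k i, mem_slab i N⟩ := by
    intro i
    have : Ψ (k i) = Ψ (p (FreeGroup.of i)) * (Ψ s ^ e i)⁻¹ := by simp [hk]
    rw [this, hΨp, hΨs]
    simp [toHNN]
  refine ⟨slab k s N, S, hS, ?_, ?_, Ψ, hΨs, ?_⟩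
  · refine (Subgroup.closure_le _).2 ?_
    rintro _ ⟨i, j, -, rfl⟩
    simp [MonoidHom.mem_ker, hker]
  · rw [eq_top_iff]
    intro g hg
    clear hg
    obtain ⟨w, rfl⟩ := hpsurj g
    have hsm : s ∈ Subgroup.closure ((slab k s N : Set G) ∪ {s}) :=
      Subgroup.subset_closure (Or.inr rfl)
    rw [← hlift]
    induction w using FreeGroup.induction_on with
    | C1 => simp
    | of i =>
      rw [FreeGroup.lift_apply_of]
      exact mul_mem (Subgroup.subset_closure (Or.inl (mem_slab i N))) (zpow_mem hsm _)
    | inv_of i hi => rw [map_inv]; exact inv_mem hi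
    | mul v w hv hw => rw [map_mul]; exact mul_mem hv hw
  · rintro ⟨b, hb⟩
    change Ψ b = _
    have hb' := hb
    unfold slab at hb'
    induction hb' using Subgroup.closure_induction with
    | mem x hx =>
      obtain ⟨i, j, hj, rfl⟩ := hx
      have := stable_zpow_mul_of (s := s) j (b := ⟨k i, mem_slab i N⟩) (b' := ⟨_, hb⟩)
        (fun l hl => conj_mem_slab i (hl.trans hj)) rfl
      rw [map_mul, map_mul, map_inv, map_zpow, hΨs, hΨk, this, mul_inv_cancel_right]
    | one => rw [map_one]; exact (map_one of).symm
    | mul x y hx hy ihx ihy =>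
      rw [map_mul, ihx hx, ihy hy, ← map_mul]
      rfl
    | inv x hx ih =>
      rw [map_inv, ih hx, ← map_inv]
      rfl

end Splitting

/-! ### Rank gradient of ascending HNN extensions -/

section Ascending

variable {G : Type*} [Group G]

theorem grank_le_card {H : Subgroup G} (T : Finset G) (hT : Subgroup.closure (T : Set G) = H) :
    grank H ≤ T.card := by
  classical
  subst hT
  have hle : grank (Subgroup.closure (T : Set G)) ≤
      (T.subtype (· ∈ Subgroup.closure (T : Set G))).card := by
    refine Nat.sInf_le ⟨T.subtype (· ∈ Subgroup.closure (T : Set G)), rfl, ?_⟩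
    convert Subgroup.closure_closure_coe_preimage (k := (T : Set G)) using 2
    ext x
    simp
  refine hle.trans ?_
  rw [Finset.card_subtype]
  exact Finset.card_filter_le _ _

theorem mem_modKer {φ : G →* Multiplicative ℤ} {i : ℕ} {g : G} :
    g ∈ modKer φ i ↔ (i : ℤ) ∣ (φ g).toAdd := by
  rw [modKer, MonoidHom.mem_ker, ← ZMod.intCast_zmod_eq_zero_iff_dvd, ← ofAdd_eq_one]
  rfl

theorem index_modKer {φ : G →* Multiplicative ℤ} (hφ : Function.Surjective φ) (i : ℕ) :
    (modKer φ i).index = i := by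
  rw [modKer, Subgroup.index_ker, MonoidHom.range_eq_top.2, Subgroup.card_top]
  · exact (Nat.card_congr Multiplicative.toAdd).trans (Nat.card_zmod i)
  · exact (Function.Surjective.comp (g := AddMonoidHom.toMultiplicative (Int.castAddHom (ZMod i)))
      (fun x => (ZMod.intCast_surjective (Multiplicative.toAdd x)).imp fun _ h => h) hφ)

theorem rg_eq_zero_of_bounded {φ : G →* Multiplicative ℤ} (hφ : Function.Surjective φ) (C : ℕ)
    (h : ∀ i : ℕ, grank (modKer φ (i + 1)) ≤ C) : rg φ = 0 := by
  refine Filter.Tendsto.liminf_eq ?_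
  refine tendsto_of_tendsto_of_tendsto_of_le_of_le' tendsto_const_nhds
    (tendsto_const_div_atTop_nhds_zero_nat (C : ℝ)) (.of_forall fun i => by positivity) ?_
  filter_upwards [Filter.eventually_ge_atTop 1] with i hi
  rw [index_modKer hφ]
  obtain ⟨j, rfl⟩ := Nat.exists_eq_add_of_le' hi
  gcongr
  exact h j

variable {B : Subgroup G} {t : G}

/-- If `t` conjugates `B` into itself, membership of `t ^ k * g * t ^ l` in `B` persists when an
amount `m` is moved from `l` to `k`. -/
theorem pow_conj_mem (ht : ∀ b ∈ B, t * b * t⁻¹ ∈ B) {g : G} {k l : ℤ} (h : t ^ k * g * t ^ l ∈ B)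
    (m : ℕ) : t ^ (k + m) * g * t ^ (l - m) ∈ B := by
  induction m with
  | zero => simpa using h
  | succ m ih =>
    convert ht _ ih using 1
    push_cast
    rw [← add_assoc, ← sub_sub, add_comm _ (1 : ℤ), zpow_add, zpow_sub _ _ 1]
    simp [mul_assoc]

theorem exists_pow_mul_mul_pow_mem (ht : ∀ b ∈ B, t * b * t⁻¹ ∈ B)
    (hgen : Subgroup.closure ((B : Set G) ∪ {t}) = ⊤) (g : G) :
    ∃ k l : ℤ, t ^ k * g * t ^ l ∈ B := by
  have hg : g ∈ Subgroup.closure ((B : Set G) ∪ {t}) := hgen ▸ Subgroup.mem_top g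
  induction hg using Subgroup.closure_induction with
  | mem x hx =>
    rcases hx with hx | rfl
    · exact ⟨0, 0, by simpa using hx⟩
    · exact ⟨0, -1, by simp⟩
  | one => exact ⟨0, 0, by simp⟩
  | mul x y _ _ hx hy =>
    obtain ⟨k, l, h⟩ := hx
    obtain ⟨k', l', h'⟩ := hy
    have h1 := pow_conj_mem ht h (l + k').toNat
    have h2 := pow_conj_mem ht h' (-(l + k')).toNat
    refine ⟨k + (l + k').toNat, l' - (-(l + k')).toNat, ?_⟩
    convert mul_mem h1 h2 using 1
    -- `k` or `k'` has been raised just enough for the two inner powers of `t` to cancel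
    have : l - (l + k').toNat = -(k' + (-(l + k')).toNat) := by omega
    rw [this, zpow_neg]
    simp only [mul_assoc, inv_mul_cancel_left]
  | inv x _ hx =>
    obtain ⟨k, l, h⟩ := hx
    exact ⟨-l, -k, by simpa [mul_assoc] using inv_mem h⟩

/-- If `G` is an ascending HNN extension of the finitely generated group `B = ⟨S⟩` with stable
letter `t`, then `G_i` is generated by `S` and `t ^ i`, so its rank is at most `#S + 1`. -/
theorem rg_eq_zero_of_ascending {φ : G →* Multiplicative ℤ} (hφ : Function.Surjective φ)
    (S : Finset G) (hS : Subgroup.closure (S : Set G) = B) (hB : B ≤ φ.ker)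
    (ht : ∀ b ∈ B, t * b * t⁻¹ ∈ B) (hgen : Subgroup.closure ((B : Set G) ∪ {t}) = ⊤)
    (hu : IsUnit (φ t).toAdd) : rg φ = 0 := by
  classical
  refine rg_eq_zero_of_bounded hφ (S.card + 1) fun j => ?_
  set i := j + 1 with hi
  refine (grank_le_card (insert (t ^ i) S) ?_).trans (Finset.card_insert_le _ _)
  apply le_antisymm
  · rw [Subgroup.closure_le]
    intro x hx
    rw [SetLike.mem_coe, mem_modKer]
    rcases Finset.mem_insert.1 (Finset.mem_coe.1 hx) with rfl | hx
    · simp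
    · have : φ x = 1 := hB (hS ▸ Subgroup.subset_closure hx)
      simp [this]
  · intro g hg
    rw [mem_modKer] at hg
    set T := Subgroup.closure ((insert (t ^ i) S : Finset G) : Set G) with hT
    have hBT : B ≤ T := by
      rw [← hS]
      exact Subgroup.closure_mono (by simp)
    have htT : ∀ n : ℤ, (i : ℤ) ∣ n → t ^ n ∈ T := by
      rintro _ ⟨n, rfl⟩
      rw [zpow_mul, zpow_natCast]
      exact zpow_mem (Subgroup.subset_closure (by simp)) n
    obtain ⟨k, l, h⟩ := exists_pow_mul_mul_pow_mem ht hgen g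
    -- raise the exponent `k` to a multiple of `i`
    obtain ⟨m, hm⟩ : ∃ m : ℕ, (i : ℤ) ∣ k + m := by
      refine ⟨(-k % i).toNat, ?_⟩
      rw [Int.toNat_of_nonneg (Int.emod_nonneg _ (by omega))]
      have := Int.emod_add_mul_ediv (-k) i
      exact ⟨-(-k / i), by linarith⟩
    have h := pow_conj_mem ht h m
    have hl : (i : ℤ) ∣ l - m := by
      have h1 : φ _ = 1 := hB h
      have h2 := congrArg Multiplicative.toAdd h1
      simp only [map_mul, map_zpow, toAdd_mul, toAdd_zpow, toAdd_one, smul_eq_mul] at h2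
      rw [← hu.dvd_mul_right]
      have h3 : (l - m) * (φ t).toAdd = -((k + m) * (φ t).toAdd + (φ g).toAdd) := by linarith
      rw [h3]
      exact (((hm.mul_right _).add hg).neg_right)
    have := mul_mem (mul_mem (inv_mem (htT _ hm)) (hBT h)) (inv_mem (htT _ hl))
    simpa [mul_assoc] using this

end Ascending

/-- Let `G` be a finitely presented group containing no subgroup
isomorphic to the free group `F₂` of rank 2.  Then `rg(G, φ) = 0` for every surjective
homomorphism `φ : G → ℤ`. -/
theorem rg_zero_of_no_free_subgroup
    {G : Type*} [Group G] (hG : IsFinitelyPresented G)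
    (hF2 : ¬ ∃ H : Subgroup G, Nonempty (H ≃* FreeGroup (Fin 2))) :
    ∀ φ : G →* Multiplicative ℤ, Function.Surjective φ → rg φ = 0 := by
  intro φ hφ
  obtain ⟨n, R, hR, ⟨f⟩⟩ := hG
  obtain ⟨s, hs⟩ := hφ (Multiplicative.ofAdd 1)
  obtain ⟨B, S, hS, hB, hgen, Ψ, hΨs, hΨB⟩ := exists_toHNN hR f φ hs
  by_cases h1 : ∀ b ∈ B, s * b * s⁻¹ ∈ B
  · exact rg_eq_zero_of_ascending hφ S hS hB h1 hgen (by simp [hs])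
  by_cases h2 : ∀ b ∈ B, s⁻¹ * b * s⁻¹⁻¹ ∈ B
  · refine rg_eq_zero_of_ascending hφ S hS hB h2 ?_ (by simp [hs])
    rw [eq_top_iff, ← hgen, Subgroup.closure_le]
    rintro x (hx | rfl)
    · exact Subgroup.subset_closure (Or.inl hx)
    · exact inv_mem_iff.1 (Subgroup.subset_closure (Or.inr rfl))
  push Not at h1 h2
  obtain ⟨b, hb, hb1⟩ := h1
  obtain ⟨b', hb', hb1'⟩ := h2
  refine absurd ?_ hF2
  have key := exists_free_pair (θ := conjIso B s) (b := ⟨b, hb⟩) (b' := ⟨b', hb'⟩)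
    (mt mem_conjDom.1 hb1) (mt mem_conjDom.1 hb1')
  have hcomp : Ψ.comp (FreeGroup.lift ![s, b' * s * b⁻¹]) =
      FreeGroup.lift ![HNNExtension.t, HNNExtension.of ⟨b', hb'⟩ * HNNExtension.t *
        (HNNExtension.of ⟨b, hb⟩)⁻¹] := by
    ext i
    fin_cases i
    · simpa using hΨs
    · simpa [hΨs] using congrArg₂ (fun x y => x * HNNExtension.t * y⁻¹)
        (hΨB ⟨b', hb'⟩) (hΨB ⟨b, hb⟩)
  rw [← hcomp, MonoidHom.coe_comp] at key
  exact ⟨_, ⟨(MonoidHom.ofInjective key.of_comp).symm⟩⟩
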